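/- arXiv:1012.2071 — 2 statements merged into one kernel-verified Lean document; each statement's English description precedes it below -/
import Mathlib

section
/- Let n, m be positive integers and Θ a real n×m matrix. Then Θ is multiplicatively badly approximable if and only if its transpose ᵗΘ is multiplicatively badly approximable. -/
open MeasureTheory Filter Matrix

noncomputable section

/-- Geometric mean of the absolute values of the coordinates: Π(z). -/
def Pigeo {k : ℕ} (z : Fin k → ℝ) : ℝ := (∏ i, |z i|) ^ ((1:ℝ)/k)

/-- Geometric mean of `max 1 |z i|`: Π'(z). -/
def Pigeo' {k : ℕ} (z : Fin k → ℝ) : ℝ := (∏ i, max 1 |z i|) ^ ((1:ℝ)/k)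

/-- Coordinatewise cast of an integer vector to a real vector. -/
def ivec {k : ℕ} (x : Fin k → ℤ) : Fin k → ℝ := fun i => (x i : ℝ)

/-- The constant Δ_d = (2^{d-1}√d)⁻¹ · vol_{d-1}{x ∈ [-1,1]^d : x₁+⋯+x_d = 0}. -/
def Delta (d : ℕ) : ℝ :=
  ((2:ℝ) ^ (d - 1) * Real.sqrt d)⁻¹ *
    (μH[(d:ℝ) - 1] {x : EuclideanSpace ℝ (Fin d) | (∀ i, |x i| ≤ 1) ∧ ∑ i, x i = 0}).toReal

/-- Θ (an n×m matrix) is multiplicatively badly approximable. -/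
def MultBad (n m : ℕ) (Θ : Matrix (Fin n) (Fin m) ℝ) : Prop :=
  0 < sInf {c : ℝ | ∃ x : Fin m → ℤ, ∃ y : Fin n → ℤ, x ≠ 0 ∧
    c = Pigeo' (ivec x) ^ m * Pigeo (Θ.mulVec (ivec x) - ivec y) ^ n}

lemma Pigeo_pow {k : ℕ} (hk : 0 < k) (z : Fin k → ℝ) : Pigeo z ^ k = ∏ i, |z i| := by
  rw [Pigeo, one_div, Real.rpow_inv_natCast_pow (Finset.prod_nonneg fun i _ => abs_nonneg _) hk.ne']

lemma Pigeo'_pow {k : ℕ} (hk : 0 < k) (z : Fin k → ℝ) :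
    Pigeo' z ^ k = ∏ i, max 1 |z i| := by
  rw [Pigeo', one_div, Real.rpow_inv_natCast_pow
    (Finset.prod_nonneg fun i _ => zero_le_one.trans (le_max_left _ _)) (Nat.ne_of_gt hk)]

/-- `MultBad` as a uniform positive lower bound for products. -/
lemma multBad_iff {n m : ℕ} (hn : 0 < n) (hm : 0 < m) (Θ : Matrix (Fin n) (Fin m) ℝ) :
    MultBad n m Θ ↔ ∃ c : ℝ, 0 < c ∧ ∀ (x : Fin m → ℤ) (y : Fin n → ℤ), x ≠ 0 →
      c ≤ (∏ j, max 1 |ivec x j|) * ∏ i, |(Θ.mulVec (ivec x) - ivec y) i| := by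
  unfold MultBad
  simp only [Pigeo_pow hn, Pigeo'_pow hm]
  constructor
  · refine fun h => ⟨_, h, fun x y hx => csInf_le ⟨0, ?_⟩ ⟨x, y, hx, rfl⟩⟩
    rintro _ ⟨x, y, -, rfl⟩
    positivity
  · rintro ⟨c, hc, h⟩
    refine hc.trans_le (le_csInf ⟨_, fun _ => 1, 0, ?_, rfl⟩ ?_)
    · intro h1
      simpa using congrFun h1 ⟨0, hm⟩
    · rintro _ ⟨x, y, hx, rfl⟩
      exact h x y hx

/-- Minkowski's linear forms theorem, with strict inequalities. -/
lemma exists_int_ne_zero_abs_mulVec_lt {ι : Type*} [Fintype ι] [DecidableEq ι]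
    (M : Matrix ι ι ℝ) (hM : M.det ≠ 0) (r : ι → ℝ) (hr : ∀ i, 0 < r i)
    (h : |M.det| < ∏ i, r i) :
    ∃ z : ι → ℤ, z ≠ 0 ∧ ∀ i, |(M *ᵥ fun k => (z k : ℝ)) i| < r i := by
  set B : Set (ι → ℝ) := Set.pi Set.univ fun i => Set.Ioo (-r i) (r i) with hB
  have hvB : volume B = ENNReal.ofReal (2 ^ Fintype.card ι * ∏ i, r i) := by
    rw [hB, Real.volume_pi_Ioo, ← ENNReal.ofReal_prod_of_nonneg
      (fun i _ => by linarith [hr i])]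
    congr 1
    simp only [sub_neg_eq_add, ← two_mul, Finset.prod_mul_distrib, Finset.prod_const,
      Finset.card_univ]
  set b := Pi.basisFun ℝ ι
  have hdet : LinearMap.det (Matrix.toLin' M) ≠ 0 := by rwa [LinearMap.det_toLin']
  have hvol : volume (ZSpan.fundamentalDomain b) * 2 ^ Module.finrank ℝ (ι → ℝ)
      < volume (Matrix.toLin' M ⁻¹' B) := by
    have h1 : volume (ZSpan.fundamentalDomain b) = 1 := by
      rw [ZSpan.volume_fundamentalDomain]
      have : Matrix.of b = 1 := by
        ext i j
        simp [b, Pi.single_apply, Matrix.one_apply, eq_comm]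
      simp [this]
    rw [Measure.addHaar_preimage_linearMap _ hdet, hvB, h1, one_mul,
      Module.finrank_fintype_fun_eq_card, LinearMap.det_toLin',
      ← ENNReal.ofReal_mul (abs_nonneg _),
      show (2 : ENNReal) ^ Fintype.card ι = ENNReal.ofReal (2 ^ Fintype.card ι) by
        rw [ENNReal.ofReal_pow zero_le_two]; simp]
    have hd : 0 < |M.det| := abs_pos.2 hM
    rw [ENNReal.ofReal_lt_ofReal_iff_of_nonneg (by positivity), abs_inv, inv_mul_eq_div,
      lt_div_iff₀ hd]
    gcongr
  have : Countable (Submodule.span ℤ (Set.range b)).toAddSubgroup :=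
    inferInstanceAs (Countable (Submodule.span ℤ (Set.range b)))
  obtain ⟨z, hz0, hzB⟩ := exists_ne_zero_mem_lattice_of_measure_mul_two_pow_lt_measure
    (L := (Submodule.span ℤ (Set.range b)).toAddSubgroup)
    (ZSpan.isAddFundamentalDomain b volume) (s := Matrix.toLin' M ⁻¹' B)
    (by
      intro x hx i _
      have := hx i trivial
      rw [map_neg]
      simp only [Pi.neg_apply, Set.mem_Ioo] at this ⊢
      constructor <;> linarith [this.1, this.2])
    ((convex_pi fun i _ => convex_Ioo _ _).linear_preimage _) hvol
  have hzint : ∀ i, ∃ k : ℤ, (k : ℝ) = (z : ι → ℝ) i := by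
    intro i
    have := (b.mem_span_iff_repr_mem ℤ (z : ι → ℝ)).1 z.2 i
    simpa [b] using this
  choose k hk using hzint
  have hkz : (fun i => (k i : ℝ)) = (z : ι → ℝ) := funext hk
  refine ⟨k, ?_, fun i => ?_⟩
  · rintro rfl
    apply hz0
    ext i
    simp [← hk i]
  · rw [hkz, abs_lt]
    exact hzB i trivial

/-- Integer points in a box cut by the hyperplane strip attached to an integer point `(u, v)`. -/
lemma exists_int_mem_box {n m : ℕ} (Θ : Matrix (Fin n) (Fin m) ℝ) (u : Fin n → ℤ)
    (v : Fin m → ℤ) (i₀ : Fin n) (hu : u i₀ ≠ 0) (l : Fin m → ℝ) (r : Fin n → ℝ)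
    (hl : ∀ j, 0 < l j) (hr : ∀ i, 0 < r i) (hr₀ : r i₀ = 1)
    (h : |(u i₀ : ℝ)| < (∏ j, l j) * ∏ i, r i) :
    ∃ (x : Fin m → ℤ) (y : Fin n → ℤ), (x = 0 → y ≠ 0) ∧ (∀ j, |ivec x j| < l j) ∧
      (∀ i, i ≠ i₀ → |(Θ.mulVec (ivec x) - ivec y) i| < r i) ∧
      ∑ j, v j * x j = ∑ i, u i * y i := by
  set C : Matrix (Fin n) (Fin m) ℝ := Θ.updateRow i₀ (ivec v) with hC
  set D : Matrix (Fin n) (Fin n) ℝ := -((1 : Matrix (Fin n) (Fin n) ℝ).updateRow i₀ (ivec u))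
    with hD
  have hdet : |(Matrix.fromBlocks (1 : Matrix (Fin m) (Fin m) ℝ) 0 C D).det| = |(u i₀ : ℝ)| := by
    rw [Matrix.det_fromBlocks_zero₁₂, Matrix.det_one, one_mul, hD, Matrix.det_neg, abs_mul,
      abs_pow, abs_neg, abs_one, one_pow, one_mul, ← Matrix.cramer_transpose_apply,
      Matrix.transpose_one, Matrix.cramer_one]
    rfl
  obtain ⟨z, hz, hzr⟩ := exists_int_ne_zero_abs_mulVec_lt (Matrix.fromBlocks 1 0 C D)
    (by rw [← abs_pos, hdet]; positivity) (Sum.elim l r)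
    (by rintro (j | i); exacts [hl j, hr i])
    (by rwa [hdet, Fintype.prod_sum_type])
  have hz' : (fun k => (z k : ℝ)) = Sum.elim (ivec (z ∘ Sum.inl)) (ivec (z ∘ Sum.inr)) := by
    ext (j | i) <;> rfl
  rw [hz', Matrix.fromBlocks_mulVec] at hzr
  refine ⟨z ∘ Sum.inl, z ∘ Sum.inr, fun hx hy => hz ?_, fun j => ?_, fun i hi => ?_, ?_⟩
  · ext (j | i)
    exacts [congrFun hx j, congrFun hy i]
  · simpa using hzr (Sum.inl j)
  · have := hzr (Sum.inr i)
    simp only [Sum.elim_inr, Sum.elim_comp_inl, Sum.elim_comp_inr] at this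
    simpa [hC, hD, Matrix.mulVec, dotProduct, hi, Matrix.one_apply, sub_eq_add_neg] using this
  · have := hzr (Sum.inr i₀)
    simp only [Sum.elim_inr, hr₀] at this
    have h2 : |((∑ j, v j * z (Sum.inl j) - ∑ i, u i * z (Sum.inr i) : ℤ) : ℝ)| < 1 := by
      simpa [hC, hD, Matrix.mulVec, dotProduct, ivec, sub_eq_add_neg] using this
    rw [← Int.cast_abs] at h2
    have h3 : |∑ j, v j * z (Sum.inl j) - ∑ i, u i * z (Sum.inr i)| < 1 := by exact_mod_cast h2
    exact sub_eq_zero.1 (Int.abs_lt_one_iff.1 h3)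

/-- The pairing of a point of the lattice of `Θ` with a point of the lattice of `Θᵀ`. -/
lemma sum_mul_eq_of_sum_eq {n m : ℕ} (Θ : Matrix (Fin n) (Fin m) ℝ) {u y : Fin n → ℤ}
    {v x : Fin m → ℤ} (h : ∑ j, v j * x j = ∑ i, u i * y i) :
    ∑ i, ivec u i * (Θ.mulVec (ivec x) - ivec y) i =
      ∑ j, ivec x j * (Θᵀ.mulVec (ivec u) - ivec v) j := by
  have h1 : ivec u ⬝ᵥ Θ *ᵥ ivec x = ivec x ⬝ᵥ Θᵀ *ᵥ ivec u := by
    rw [Matrix.mulVec_transpose, Matrix.dotProduct_mulVec, dotProduct_comm]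
  have h2 : ivec u ⬝ᵥ ivec y = ivec x ⬝ᵥ ivec v := by
    have : ((∑ j, v j * x j : ℤ) : ℝ) = ((∑ i, u i * y i : ℤ) : ℝ) := by rw [h]
    push_cast at this
    simp only [dotProduct, ivec]
    rw [← this]
    exact Finset.sum_congr rfl fun j _ => mul_comm _ _
  change ivec u ⬝ᵥ (Θ *ᵥ ivec x - ivec y) = ivec x ⬝ᵥ (Θᵀ *ᵥ ivec u - ivec v)
  rw [dotProduct_sub, dotProduct_sub, h1, h2]

/-- A scale `T` at which the box with sides `max 1 (T / a j)` and `T / w i` has volume `2 T`. -/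
lemma exists_scale {n m : ℕ} (hn : 0 < n) (a : Fin m → ℝ) (ha : ∀ j, 0 < a j)
    (w : Fin n → ℝ) (hw : ∀ i, 1 ≤ w i) {T₁ : ℝ} (hT₁ : 0 < T₁)
    (h : 2 * ((∏ j, a j) * ∏ i, w i) ≤ T₁ ^ (m + n - 1)) :
    ∃ T, 0 < T ∧ T ≤ T₁ ∧ (∏ j, max 1 (T / a j)) * T ^ (n - 1) = 2 * ∏ i, w i := by
  have hw1 : 1 ≤ ∏ i, w i := Finset.one_le_prod fun i _ => hw i
  have hcont : Continuous fun T : ℝ => (∏ j, max 1 (T / a j)) * T ^ (n - 1) := by fun_prop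
  have h0 : (∏ j, max 1 ((0 : ℝ) / a j)) * (0 : ℝ) ^ (n - 1) < 2 * ∏ i, w i := by
    have : (0 : ℝ) ^ (n - 1) ≤ 1 := pow_le_one₀ le_rfl zero_le_one
    simp only [zero_div, zero_le_one, sup_of_le_left, Finset.prod_const_one, one_mul]
    linarith
  have h1 : 2 * ∏ i, w i ≤ (∏ j, max 1 (T₁ / a j)) * T₁ ^ (n - 1) := by
    have hA : 0 < ∏ j, a j := Finset.prod_pos fun j _ => ha j
    have h2 : T₁ ^ m / ∏ j, a j ≤ ∏ j, max 1 (T₁ / a j) := by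
      calc T₁ ^ m / ∏ j, a j = ∏ j, T₁ / a j := by
            rw [Finset.prod_div_distrib]; simp
        _ ≤ _ := Finset.prod_le_prod (fun j _ => (div_pos hT₁ (ha j)).le)
            fun j _ => le_max_right _ _
    refine le_trans ?_ (mul_le_mul_of_nonneg_right h2 (by positivity))
    rw [div_mul_eq_mul_div, ← pow_add, ← Nat.add_sub_assoc hn, le_div_iff₀ hA]
    linarith
  obtain ⟨T, hT, hTe⟩ := intermediate_value_Icc hT₁.le hcont.continuousOn ⟨h0.le, h1⟩
  refine ⟨T, hT.1.lt_of_ne ?_, hT.2, hTe⟩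
  rintro rfl
  exact h0.ne hTe

lemma exists_pos_dominating_prod_lt {m : ℕ} (a : Fin m → ℝ) {W δ : ℝ}
    (h : (∏ j, |a j|) * W < δ) :
    ∃ b : Fin m → ℝ, (∀ j, 0 < b j) ∧ (∀ j, |a j| ≤ b j) ∧ (∏ j, b j) * W < δ := by
  have hc : Continuous fun t : ℝ => (∏ j, (|a j| + t)) * W := by fun_prop
  have h1 : ∀ᶠ t in nhdsWithin (0 : ℝ) (Set.Ioi 0), (∏ j, (|a j| + t)) * W < δ :=
    (hc.continuousAt.eventually_lt continuousAt_const (by simpa using h)).filter_mono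
      nhdsWithin_le_nhds
  obtain ⟨t, ht, ht0⟩ := (h1.and self_mem_nhdsWithin).exists
  have ht0 : 0 < t := ht0
  exact ⟨fun j => |a j| + t, fun j => by positivity, fun j => by linarith, ht⟩

/-- Multiplicative transference: a small product for `Θᵀ` produces a small product for `Θ`. -/
lemma exists_prod_le_of_transpose {n m : ℕ} (hn : 0 < n) (hm : 0 < m)
    (Θ : Matrix (Fin n) (Fin m) ℝ) (u : Fin n → ℤ) (v : Fin m → ℤ) (hu : u ≠ 0)
    {T₁ : ℝ} (hT₁ : 0 < T₁) (hT₁' : (m + n) * T₁ < 1)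
    (h : (∏ i, max 1 |ivec u i|) * ∏ j, |(Θᵀ.mulVec (ivec u) - ivec v) j|
      < T₁ ^ (m + n - 1) / 2) :
    ∃ (x : Fin m → ℤ) (y : Fin n → ℤ), x ≠ 0 ∧
      (∏ j, max 1 |ivec x j|) * ∏ i, |(Θ.mulVec (ivec x) - ivec y) i| ≤
        2 * (m + n) * T₁ := by
  obtain ⟨i₀, hi₀ : u i₀ ≠ 0⟩ := Function.ne_iff.1 hu
  set w : Fin n → ℝ := fun i => max 1 |ivec u i| with hw
  have hw1 : ∀ i, 1 ≤ w i := fun i => le_max_left _ _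
  have hw0 : ∀ i, 0 < w i := fun i => zero_lt_one.trans_le (hw1 i)
  have hwu : ∀ i, |ivec u i| ≤ w i := fun i => le_max_right _ _
  have hwi₀ : w i₀ = |(u i₀ : ℝ)| :=
    max_eq_right (by simp only [ivec]; exact_mod_cast Int.one_le_abs hi₀)
  rw [mul_comm] at h
  obtain ⟨a, ha, hva, hP⟩ := exists_pos_dominating_prod_lt _ h
  obtain ⟨T, hT, hTT₁, hTe⟩ := exists_scale hn a ha w hw1 hT₁ (by linarith)
  have hW : 0 < ∏ i, w i := Finset.prod_pos fun i _ => hw0 i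
  have hprod : (∏ j, max 1 (T / a j)) * ∏ i, T / w i = 2 * T := by
    rw [Finset.prod_div_distrib, Finset.prod_const, Finset.card_univ, Fintype.card_fin,
      ← pow_sub_one_mul hn.ne', ← mul_div_assoc, ← mul_assoc, hTe]
    field_simp
  set r : Fin n → ℝ := Function.update (fun i => T / w i) i₀ 1 with hr
  have hrprod : (∏ i, r i) * (T / w i₀) = ∏ i, T / w i := by
    rw [hr, Finset.prod_update_of_mem (Finset.mem_univ _), one_mul, mul_comm,
      ← Finset.erase_eq, Finset.mul_prod_erase _ (fun i => T / w i) (Finset.mem_univ i₀)]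
  have hvol : |(u i₀ : ℝ)| < (∏ j, max 1 (T / a j)) * ∏ i, r i := by
    rw [← hrprod, ← mul_assoc, ← mul_div_assoc, div_eq_iff (hw0 _).ne'] at hprod
    rw [← hwi₀]
    nlinarith [hw0 i₀]
  obtain ⟨x, y, hxy, hx, hy, hsum⟩ := exists_int_mem_box Θ u v i₀ hi₀
    (fun j => max 1 (T / a j)) r (fun j => zero_lt_one.trans_le (le_max_left _ _))
    (fun i => by
      rcases eq_or_ne i i₀ with rfl | hi
      · simp [hr]
      · simpa [hr, hi] using div_pos hT (hw0 i))
    (by simp [hr]) hvol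
  set z := Θ.mulVec (ivec x) - ivec y with hz
  have hy' : ∀ i, i ≠ i₀ → |z i| ≤ T / w i := fun i hi => by
    simpa [hr, hi] using (hy i hi).le
  have hxa : ∀ j, |ivec x j * (Θᵀ.mulVec (ivec u) - ivec v) j| ≤ T := fun j => by
    rw [abs_mul]
    rcases le_total (T / a j) 1 with h1 | h1
    · have h2 := hx j
      simp only [max_eq_left h1, ivec] at h2
      have h3 : x j = 0 := Int.abs_lt_one_iff.1 (by exact_mod_cast h2)
      simpa [ivec, h3] using hT.le
    · have h2 := hx j
      simp only [max_eq_right h1] at h2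
      calc _ ≤ T / a j * a j := mul_le_mul h2.le (hva j) (abs_nonneg _) (div_pos hT (ha j)).le
        _ = T := div_mul_cancel₀ _ (ha j).ne'
  have hz₀ : |z i₀| * w i₀ ≤ (m + n) * T := by
    have h1 := sum_mul_eq_of_sum_eq Θ hsum
    rw [← Finset.add_sum_erase _ _ (Finset.mem_univ i₀), ← eq_sub_iff_add_eq] at h1
    have h2 : |∑ j, ivec x j * (Θᵀ.mulVec (ivec u) - ivec v) j| ≤ m * T :=
      (Finset.abs_sum_le_sum_abs _ _).trans
        ((Finset.sum_le_sum fun j _ => hxa j).trans (by simp))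
    have h3 : |∑ i ∈ Finset.univ.erase i₀, ivec u i * z i| ≤ n * T := by
      refine (Finset.abs_sum_le_sum_abs _ _).trans ((Finset.sum_le_sum (g := fun _ => T)
        fun i hi => ?_).trans ?_)
      · rw [abs_mul]
        calc _ ≤ w i * (T / w i) := mul_le_mul (hwu i) (hy' i (Finset.ne_of_mem_erase hi))
              (abs_nonneg _) (hw0 i).le
          _ = T := mul_div_cancel₀ _ (hw0 i).ne'
      · rw [Finset.sum_const, nsmul_eq_mul]
        gcongr
        exact (Finset.card_le_univ _).trans (by simp)
    calc |z i₀| * w i₀ = |ivec u i₀ * z i₀| := by rw [hwi₀, abs_mul, mul_comm]; rfl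
      _ ≤ _ := by rw [h1]; exact (abs_sub _ _).trans (by linarith)
  have hd : (1 : ℝ) ≤ m + n := by exact_mod_cast Nat.le_add_right_of_le hm
  have hz₀' : |z i₀| ≤ (m + n) * (T / w i₀) := by
    rwa [← mul_div_assoc, le_div_iff₀ (hw0 _)]
  refine ⟨x, y, fun hx0 => hxy hx0 (funext fun i => ?_), ?_⟩
  · have h1 : |z i| < 1 := by
      have h2 : |z i| ≤ (m + n) * (T / w i) := by
        rcases eq_or_ne i i₀ with rfl | hi
        · exact hz₀'
        · exact (hy' i hi).trans (le_mul_of_one_le_left (div_pos hT (hw0 i)).le hd)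
      have h3 : T / w i ≤ T₁ := (div_le_self hT.le (hw1 i)).trans hTT₁
      exact (h2.trans (by gcongr)).trans_lt hT₁'
    have h2 : z i = -(y i : ℝ) := by
      simp [hz, hx0, ivec, Matrix.mulVec, dotProduct]
    rw [h2, abs_neg] at h1
    exact Int.abs_lt_one_iff.1 (by exact_mod_cast h1)
  · have h1 : ∏ i, |z i| ≤ (m + n) * ∏ i, T / w i := by
      rw [← Finset.mul_prod_erase _ _ (Finset.mem_univ i₀),
        ← Finset.mul_prod_erase _ (fun i => T / w i) (Finset.mem_univ i₀), ← mul_assoc]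
      refine mul_le_mul hz₀' (Finset.prod_le_prod (fun i _ => abs_nonneg _)
        fun i hi => hy' i (Finset.ne_of_mem_erase hi))
        (Finset.prod_nonneg fun i _ => abs_nonneg _) ?_
      have := hw0 i₀
      positivity
    have h2 : ∏ j, max 1 |ivec x j| ≤ ∏ j, max 1 (T / a j) :=
      Finset.prod_le_prod (fun j _ => by positivity)
        fun j _ => max_le (le_max_left _ _) (hx j).le
    calc _ ≤ (∏ j, max 1 (T / a j)) * ((m + n) * ∏ i, T / w i) :=
          mul_le_mul h2 h1 (Finset.prod_nonneg fun i _ => abs_nonneg _)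
            (Finset.prod_nonneg fun j _ => by positivity)
      _ = (m + n) * (2 * T) := by rw [← hprod]; ring
      _ ≤ 2 * (m + n) * T₁ := by nlinarith

lemma MultBad.transpose {n m : ℕ} (hn : 0 < n) (hm : 0 < m) {Θ : Matrix (Fin n) (Fin m) ℝ}
    (h : MultBad n m Θ) : MultBad m n Θᵀ := by
  rw [multBad_iff hn hm] at h
  rw [multBad_iff hm hn]
  obtain ⟨c, hc, h⟩ := h
  have hd : (0 : ℝ) < m + n := by positivity
  set T₁ : ℝ := min c 1 / (4 * (m + n)) with hT₁
  have hc1 : 0 < min c 1 := lt_min hc one_pos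
  have hpos : 0 < T₁ := by positivity
  have hmul : (m + n) * T₁ = min c 1 / 4 := by rw [hT₁]; field_simp
  refine ⟨T₁ ^ (m + n - 1) / 2, by positivity, fun u v hu => ?_⟩
  by_contra! hlt
  obtain ⟨x, y, hx, hle⟩ := exists_prod_le_of_transpose hn hm Θ u v hu hpos
    (by linarith [min_le_right c 1]) hlt
  linarith [h x y hx, min_le_left c 1]

/-- Corollary 1: Θ is multiplicatively badly approximable iff ᵗΘ is. -/
theorem multBad_transpose_iff (n m : ℕ) (hn : 0 < n) (hm : 0 < m)
    (Θ : Matrix (Fin n) (Fin m) ℝ) :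
    MultBad n m Θ ↔ MultBad m n Θᵀ :=
  ⟨fun h => h.transpose hn hm, fun h => by simpa using h.transpose hm hn⟩
end
end

section
/- Let α, β be real numbers, set c = √3/2, and let ρ denote the inverse function of t ↦ c·t²·√(log(1+t)) on ℝ₊. If there are infinitely many pairs (p,q) ∈ ℤ² \ {(0,0)} such that ‖pα + qβ‖ ≤ 1/(t²·log(1+t)) with t = √(max(1,|p|)·max(1,|q|)), then there are infinitely many positive integers q such that ‖qα‖·‖qβ‖ ≤ c² / (ρ(q)²·log(1+ρ(q))). -/
noncomputable section

/-- Distance from a real number to the nearest integer. -/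
def nint (x : ℝ) : ℝ := |x - (round x : ℤ)|

lemma nint_nonneg (x : ℝ) : 0 ≤ nint x := abs_nonneg _

lemma nint_le_abs_sub_intCast (x : ℝ) (a : ℤ) : nint x ≤ |x - a| := round_le x a

lemma nint_le_half (x : ℝ) : nint x ≤ 1 / 2 := abs_sub_round x

lemma nint_natAbs_mul_le (n a : ℤ) (x : ℝ) : nint ((n.natAbs : ℕ) * x) ≤ |n * x - a| := by
  have key : ((n.natAbs : ℕ) : ℝ) = |(n : ℝ)| := by
    rw [← Int.cast_abs, Int.abs_eq_natAbs, Int.cast_natCast]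
  rw [key]
  rcases abs_choice (n : ℝ) with h | h <;> rw [h]
  · exact nint_le_abs_sub_intCast _ _
  · refine (nint_le_abs_sub_intCast _ (-a)).trans (le_of_eq ?_)
    rw [← abs_neg]
    congr 1
    push_cast
    ring

lemma nint_nat_mul_eq_zero {x : ℝ} (n : ℕ) (h : nint x = 0) : nint (n * x) = 0 := by
  refine le_antisymm ?_ (nint_nonneg _)
  have hx : x = (round x : ℤ) := by
    unfold nint at h
    linarith [abs_eq_zero.mp h]
  refine (nint_le_abs_sub_intCast _ (n * round x)).trans (le_of_eq ?_)
  rw [abs_eq_zero]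
  push_cast
  rw [← hx, sub_self]

/-- Hermite's bound for the minimum of a positive definite binary quadratic form. -/
lemma exists_binary_quadratic_le (g y : ℝ) (hy : 0 < y) :
    ∃ k l : ℤ, (k ≠ 0 ∨ l ≠ 0) ∧
      Real.sqrt 3 * ((k * g + l) ^ 2 + (k * y) ^ 2) ≤ 2 * y := by
  obtain ⟨γ, hγ⟩ := ModularGroup.exists_smul_mem_fd (UpperHalfPlane.mk ⟨g, y⟩ hy)
  have h3 := ModularGroup.three_le_four_mul_im_sq_of_mem_fd hγ
  have him := ModularGroup.im_smul_eq_div_normSq γ (UpperHalfPlane.mk ⟨g, y⟩ hy)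
  have hpos := (γ • UpperHalfPlane.mk ⟨g, y⟩ hy).im_pos
  generalize (γ • UpperHalfPlane.mk ⟨g, y⟩ hy).im = v at *
  have hden : Complex.normSq (UpperHalfPlane.denom γ (UpperHalfPlane.mk ⟨g, y⟩ hy))
      = ((γ 1 0 : ℤ) * g + (γ 1 1 : ℤ)) ^ 2 + ((γ 1 0 : ℤ) * y) ^ 2 := by
    rw [ModularGroup.denom_apply]
    simp [Complex.normSq_apply]
    ring
  rw [hden] at him
  refine ⟨γ 1 0, γ 1 1, ?_, ?_⟩
  · by_contra! hc
    have := γ.det_coe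
    rw [Matrix.det_fin_two, hc.1, hc.2] at this
    simp at this
  · have hv : Real.sqrt 3 ≤ 2 * v := by
      rw [Real.sqrt_le_left (by positivity)]
      linarith
    set D := ((γ 1 0 : ℤ) * g + (γ 1 1 : ℤ)) ^ 2 + ((γ 1 0 : ℤ) * y) ^ 2 with hD
    have hD0 : 0 ≤ D := by positivity
    have hDne : D ≠ 0 := by
      intro h0
      rw [h0, div_zero] at him
      exact hpos.ne' him
    have hvD : v * D = y := by
      rw [him]
      exact div_mul_cancel₀ _ hDne
    nlinarith

lemma mul_abs_sub_le {a z w : ℝ} (ha : 0 ≤ a) (h : z ^ 2 + 3 * a ^ 2 ≤ 4) (hw : |w| ≤ a) :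
    a * |z ^ 2 - w ^ 2| ≤ 16 / 9 := by
  have hw2 : w ^ 2 ≤ a ^ 2 := sq_le_sq.mpr (by rwa [abs_of_nonneg ha])
  have h1 : a ≤ 7 / 6 := by nlinarith [sq_nonneg z]
  have h2 : a * (4 - 3 * a ^ 2) ≤ 16 / 9 := by
    nlinarith [mul_nonneg (sq_nonneg (a - 2 / 3)) (by linarith : 0 ≤ a + 4 / 3)]
  rcases abs_cases (z ^ 2 - w ^ 2) with ⟨h, -⟩ | ⟨h, -⟩ <;> rw [h]
  · refine le_trans (mul_le_mul_of_nonneg_left ?_ ha) h2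
    nlinarith [sq_nonneg w]
  · have h3 : a * a ^ 2 ≤ 7 / 6 * (4 / 3) := by
      apply mul_le_mul h1 _ (sq_nonneg a) (by norm_num)
      nlinarith [sq_nonneg z]
    refine le_trans (mul_le_mul_of_nonneg_left ?_ ha) (h3.trans (by norm_num))
    nlinarith [sq_nonneg z]

/-- The integer vectors orthogonal to `(-m, p, q)` contain a short one: here `u` and `v` are the
values `p (n α - a)` and `q (n β - b)`, and `n δ` is their sum. -/
lemma exists_short_vector (p q m : ℤ) (α β s : ℝ) (hp : p ≠ 0) (hq : q ≠ 0) (hs : 0 < s) :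
    ∃ n a b : ℤ, n * m = p * a + q * b ∧ (n ≠ 0 ∨ a ≠ 0 ∧ b ≠ 0) ∧
      (s * (p * (n * α - a) - q * (n * β - b))) ^ 2 + 3 * (n / (p * q * s)) ^ 2 ≤ 4 := by
  obtain ⟨d, p', q', hd, hco, rfl, rfl⟩ : ∃ d p' q' : ℤ, 0 < d ∧ IsCoprime p' q' ∧
      p = d * p' ∧ q = d * q' := by
    have hg : 0 < Int.gcd p q := Int.gcd_pos_of_ne_zero_left _ hp
    obtain ⟨p', q', h1, h2, h3⟩ := Int.exists_gcd_one hg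
    exact ⟨Int.gcd p q, p', q', by exact_mod_cast hg, Int.isCoprime_iff_gcd_eq_one.mpr h1,
      by rw [mul_comm]; exact h2, by rw [mul_comm]; exact h3⟩
  obtain ⟨x, y, hxy⟩ := hco
  have hp' : p' ≠ 0 := right_ne_zero_of_mul hp
  have hq' : q' ≠ 0 := right_ne_zero_of_mul hq
  have hdR : (0 : ℝ) < d := by exact_mod_cast hd
  have hpR : (p' : ℝ) ≠ 0 := by exact_mod_cast hp'
  have hqR : (q' : ℝ) ≠ 0 := by exact_mod_cast hq'
  have h3 : Real.sqrt 3 ^ 2 = 3 := Real.sq_sqrt (by norm_num)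
  have h3p : 0 < Real.sqrt 3 := by positivity
  set f : ℝ := d * p' * q' with hf
  have hf0 : f ≠ 0 := by positivity
  set e : ℝ := d * p' * (d * α - m * x) - d * q' * (d * β - m * y) with he
  obtain ⟨k, l, hkl, hle⟩ := exists_binary_quadratic_le (e / (2 * f))
    (Real.sqrt 3 / 2 / (f ^ 2 * s ^ 2)) (by positivity)
  refine ⟨d * k, k * m * x - l * q', k * m * y + l * p', ?_, ?_, ?_⟩
  · linear_combination (-(d * k * m)) * hxy
  · by_cases hk : k = 0
    · right
      have hl : l ≠ 0 := by tauto
      subst hk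
      constructor <;> simp [hl, hp', hq']
    · left
      exact mul_ne_zero hd.ne' hk
  · push_cast
    have h1 : s * (d * p' * (d * k * α - (k * m * x - l * q')) -
        d * q' * (d * k * β - (k * m * y + l * p'))) = 2 * f * s * (k * (e / (2 * f)) + l) := by
      field_simp
      rw [he, hf]
      ring
    have h2 : (d * k / (d * p' * (d * q') * s) : ℝ) = k / (f * s) := by
      rw [hf]
      field_simp
    rw [h1, h2]
    have h4 := mul_le_mul_of_nonneg_left hle (by positivity : 0 ≤ 4 * f ^ 2 * s ^ 2 / Real.sqrt 3)
    have h5 : 4 * f ^ 2 * s ^ 2 / Real.sqrt 3 * (2 * (Real.sqrt 3 / 2 / (f ^ 2 * s ^ 2))) = 4 := by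
      field_simp
    rw [h5] at h4
    refine le_trans (le_of_eq ?_) h4
    generalize (k * (e / (2 * f)) + l : ℝ) = X
    field_simp
    rw [h3]
    ring

lemma exists_nat_of_ne_zero (p q : ℤ) (α β s : ℝ) (hp : p ≠ 0) (hq : q ≠ 0) (hs : 1 < s)
    (h : nint (p * α + q * β) * (|(p : ℝ)| * |(q : ℝ)| * s ^ 2) ≤ 1) :
    ∃ n : ℕ, 0 < n ∧ 3 * ((n : ℝ) / (|(p : ℝ)| * |(q : ℝ)| * s)) ^ 2 ≤ 4 ∧
      n * (nint (n * α) * nint (n * β)) * s ≤ 4 / 9 := by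
  set m := round (p * α + q * β)
  obtain ⟨n, a, b, hnm, hne, hle⟩ := exists_short_vector p q m α β s hp hq (by linarith)
  have hpR : (p : ℝ) ≠ 0 := by exact_mod_cast hp
  have hqR : (q : ℝ) ≠ 0 := by exact_mod_cast hq
  have hnmR : (n * m : ℝ) = p * a + q * b := by exact_mod_cast hnm
  have hn : n ≠ 0 := by
    rintro rfl
    obtain ⟨ha, -⟩ := hne.resolve_left (by simp)
    have h1 : (1 : ℝ) ≤ |(p * a : ℤ)| := by
      exact_mod_cast Int.one_le_abs (mul_ne_zero hp ha)
    have h2 : 1 ≤ ((p : ℝ) * a) ^ 2 := by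
      push_cast at h1
      rwa [one_le_sq_iff_one_le_abs]
    have h3 : (q : ℝ) * b = -(p * a) := by
      simp at hnmR
      linarith
    have h4 : (s * (p * ((0 : ℤ) * α - a) - q * ((0 : ℤ) * β - b))) ^ 2
        = 4 * s ^ 2 * ((p : ℝ) * a) ^ 2 := by
      have : (s * (p * ((0 : ℤ) * α - a) - q * ((0 : ℤ) * β - b))) = s * (q * b - p * a) := by
        push_cast
        ring
      rw [this, h3]
      ring
    rw [h4] at hle
    simp at hle
    nlinarith
  have hcast : ((n.natAbs : ℕ) : ℝ) = |(n : ℝ)| := by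
    rw [← Int.cast_abs, Int.abs_eq_natAbs, Int.cast_natCast]
  set T := |(p : ℝ)| * |(q : ℝ)| with hT
  have hT0 : 0 < T := by positivity
  have hs0 : 0 < s := by linarith
  set A := |(n : ℝ)| / (T * s) with hA
  have hA0 : 0 ≤ A := by positivity
  have hA2 : (n / (p * q * s) : ℝ) ^ 2 = A ^ 2 := by
    rw [hA, hT, div_pow, div_pow, mul_pow, mul_pow, mul_pow, mul_pow, sq_abs, sq_abs, sq_abs]
  rw [hA2] at hle
  refine ⟨n.natAbs, Int.natAbs_pos.mpr hn, ?_, ?_⟩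
  · rw [hcast]
    linarith [sq_nonneg (s * (p * (n * α - a) - q * (n * β - b)))]
  · have hδ : |s * (n * (p * α + q * β - m))| ≤ A := by
      have h0 : nint (p * α + q * β) = |p * α + q * β - m| := rfl
      rw [h0] at h
      rw [abs_mul, abs_mul, abs_of_pos hs0, hA, le_div_iff₀ (by positivity)]
      calc s * (|(n : ℝ)| * |p * α + q * β - m|) * (T * s)
          = |(n : ℝ)| * (|p * α + q * β - m| * (T * s ^ 2)) := by ring
        _ ≤ |(n : ℝ)| * 1 := by gcongr
        _ = _ := mul_one _
    have key := mul_abs_sub_le hA0 hle hδ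
    have hfac : (s * (p * (n * α - a) - q * (n * β - b))) ^ 2 -
        (s * (n * (p * α + q * β - m))) ^ 2
        = -(4 * s ^ 2 * (p * q * ((n * α - a) * (n * β - b)))) := by
      have : n * (p * α + q * β - m) = p * (n * α - a) + q * (n * β - b) := by
        linear_combination -hnmR
      rw [this]
      ring
    rw [hfac, abs_neg, abs_mul, abs_of_pos (by positivity : 0 < 4 * s ^ 2), abs_mul, abs_mul, ← hT,
      abs_mul] at key
    have hprod : nint (n.natAbs * α) * nint (n.natAbs * β) ≤ |n * α - a| * |n * β - b| :=
      mul_le_mul (nint_natAbs_mul_le n a α) (nint_natAbs_mul_le n b β) (nint_nonneg _)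
        (abs_nonneg _)
    have hAT : A * (4 * s ^ 2 * (T * (|n * α - a| * |n * β - b|)))
        = 4 * (|(n : ℝ)| * (|n * α - a| * |n * β - b|) * s) := by
      rw [hA]
      field_simp
    rw [hAT] at key
    rw [hcast] at hprod ⊢
    have : |(n : ℝ)| * (nint (|(n : ℝ)| * α) * nint (|(n : ℝ)| * β)) * s
        ≤ |(n : ℝ)| * (|n * α - a| * |n * β - b|) * s := by gcongr
    linarith

lemma exists_nat_of_snd_ne_zero (q : ℤ) (α β s : ℝ) (hq : q ≠ 0) (hs : 9 / 8 < s)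
    (h : nint (q * β) * (|(q : ℝ)| * s ^ 2) ≤ 1) :
    ∃ n : ℕ, 0 < n ∧ 3 * ((n : ℝ) / (|(q : ℝ)| * s)) ^ 2 ≤ 4 ∧
      n * (nint (n * α) * nint (n * β)) * s ≤ 4 / 9 := by
  have hcast : ((q.natAbs : ℕ) : ℝ) = |(q : ℝ)| := by
    rw [← Int.cast_abs, Int.abs_eq_natAbs, Int.cast_natCast]
  have hqR : 0 < |(q : ℝ)| := by
    have : (q : ℝ) ≠ 0 := by exact_mod_cast hq
    positivity
  have hs0 : 0 < s := by linarith
  refine ⟨q.natAbs, Int.natAbs_pos.mpr hq, ?_, ?_⟩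
  · rw [hcast, ← div_div, div_self hqR.ne', div_pow, mul_div_assoc', div_le_iff₀ (by positivity)]
    nlinarith
  · have h1 : nint (q.natAbs * β) ≤ nint (q * β) := nint_natAbs_mul_le q _ β
    have h2 := nint_le_half (q.natAbs * α)
    have h3 : nint (q.natAbs * α) * nint (q.natAbs * β) ≤ 1 / 2 * nint (q * β) :=
      mul_le_mul h2 h1 (nint_nonneg _) (by norm_num)
    rw [hcast] at h3 ⊢
    have h4 : |(q : ℝ)| * (nint (|(q : ℝ)| * α) * nint (|(q : ℝ)| * β)) * s ≤
        |(q : ℝ)| * (1 / 2 * nint (q * β)) * s := by gcongr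
    refine h4.trans ?_
    by_contra! hc
    have h5 := mul_lt_mul_of_pos_right hc hs0
    nlinarith

lemma exists_nat_of_pair_ne_zero (p q : ℤ) (α β s : ℝ) (hpq : (p, q) ≠ 0) (hs : 9 / 8 < s)
    (h : nint (p * α + q * β) * (max 1 |(p : ℝ)| * max 1 |(q : ℝ)| * s ^ 2) ≤ 1) :
    ∃ n : ℕ, 0 < n ∧ 3 * ((n : ℝ) / (max 1 |(p : ℝ)| * max 1 |(q : ℝ)| * s)) ^ 2 ≤ 4 ∧
      n * (nint (n * α) * nint (n * β)) * s ≤ 4 / 9 := by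
  have hmax : ∀ r : ℤ, r ≠ 0 → max 1 |(r : ℝ)| = |(r : ℝ)| := fun r hr =>
    max_eq_right (by exact_mod_cast Int.one_le_abs hr)
  by_cases hp : p = 0
  · subst hp
    have hq : q ≠ 0 := by
      rintro rfl
      exact hpq rfl
    rw [hmax q hq] at h ⊢
    simpa using exists_nat_of_snd_ne_zero q α β s hq hs (by simpa using h)
  · by_cases hq : q = 0
    · subst hq
      rw [hmax p hp] at h ⊢
      simpa [mul_comm (nint (_ * β))] using
        exists_nat_of_snd_ne_zero p β α s hp hs (by simpa using h)
    · rw [hmax p hp, hmax q hq] at h ⊢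
      exact exists_nat_of_ne_zero p q α β s hp hq (by linarith) h

lemma log_one_add_le_two_mul {t R : ℝ} (ht : 0 < t) (hR : 0 < R) (h : R ≤ 2 * t) :
    Real.log (1 + R) ≤ 2 * Real.log (1 + t) := by
  rw [← Real.log_rpow (by linarith)]
  apply Real.log_le_log (by linarith)
  rw [Real.rpow_two]
  nlinarith

lemma le_div_of_short {t R N w : ℝ} (ht : 0 < t) (hR : 0 < R) (hw : 0 ≤ w)
    (hN : Real.sqrt 3 / 2 * R ^ 2 * Real.sqrt (Real.log (1 + R)) = N)
    (hNt : 3 * (N / (t ^ 2 * Real.sqrt (Real.log (1 + t)))) ^ 2 ≤ 4)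
    (hwN : N * w * Real.sqrt (Real.log (1 + t)) ≤ 4 / 9) :
    w ≤ (Real.sqrt 3 / 2) ^ 2 / (R ^ 2 * Real.log (1 + R)) := by
  have hLR : 0 < Real.log (1 + R) := Real.log_pos (by linarith)
  have hLt : 0 < Real.log (1 + t) := Real.log_pos (by linarith)
  have hr2 := Real.sq_sqrt hLR.le
  have hs2 := Real.sq_sqrt hLt.le
  have hr0 := Real.sqrt_pos.mpr hLR
  have hs0 := Real.sqrt_pos.mpr hLt
  have hRt : R ≤ 2 * t := by
    by_contra! hc
    have hmono : Real.sqrt (Real.log (1 + t)) ≤ Real.sqrt (Real.log (1 + R)) :=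
      Real.sqrt_le_sqrt (Real.log_le_log (by linarith) (by linarith))
    have h1 : Real.sqrt 3 / 2 * 4 ≤ N / (t ^ 2 * Real.sqrt (Real.log (1 + t))) := by
      rw [le_div_iff₀ (by positivity), ← hN]
      calc Real.sqrt 3 / 2 * 4 * (t ^ 2 * Real.sqrt (Real.log (1 + t)))
          = Real.sqrt 3 / 2 * (2 * t) ^ 2 * Real.sqrt (Real.log (1 + t)) := by ring
        _ ≤ _ := by gcongr
    have h2 := pow_le_pow_left₀ (by positivity) h1 2
    have h3 : (Real.sqrt 3 / 2 * 4) ^ 2 = 12 := by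
      rw [mul_pow, div_pow, Real.sq_sqrt (by norm_num)]
      norm_num
    linarith
  have hlog := log_one_add_le_two_mul ht hR hRt
  have h3 : Real.sqrt 3 ^ 2 = 3 := Real.sq_sqrt (by norm_num)
  have h3p : 0 < Real.sqrt 3 := by positivity
  rw [← hr2]
  generalize Real.sqrt (Real.log (1 + R)) = r at *
  generalize Real.sqrt (Real.log (1 + t)) = s at *
  generalize Real.sqrt 3 = c at *
  have hrs : r ≤ 36 / 25 * s := by
    refine abs_le_of_sq_le_sq' ?_ (by positivity) |>.2
    nlinarith
  rw [le_div_iff₀ (by positivity)]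
  have hNp : 0 < N := by rw [← hN]; positivity
  have h4 : N * w * r ≤ 16 / 25 := by
    have : N * w * r ≤ N * w * (36 / 25 * s) := by gcongr
    linarith
  have hc : 128 / 75 ≤ c := by nlinarith
  have h5 : c / 2 * (w * (R ^ 2 * r ^ 2)) ≤ 16 / 25 := by
    refine le_trans (le_of_eq ?_) h4
    rw [← hN]
    ring
  rw [div_pow, h3]
  nlinarith

lemma exists_mul_sq_sqrt_log_eq {y : ℝ} (hy : 0 < y) :
    ∃ t, 0 < t ∧ Real.sqrt 3 / 2 * t ^ 2 * Real.sqrt (Real.log (1 + t)) = y := by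
  set f : ℝ → ℝ := fun t => Real.sqrt 3 / 2 * t ^ 2 * Real.sqrt (Real.log (1 + t)) with hf
  have hcont : ContinuousOn f (Set.Icc 0 (y + 2)) := by
    apply ContinuousOn.mul (by fun_prop)
    apply Real.continuous_sqrt.comp_continuousOn
    apply ContinuousOn.log (by fun_prop)
    intro x hx
    linarith [hx.1]
  have hlarge : y ≤ f (y + 2) := by
    have h1 : (1 : ℝ) ≤ Real.sqrt 3 := Real.one_le_sqrt.mpr (by norm_num)
    have h2 : 1 ≤ Real.sqrt (Real.log (1 + (y + 2))) := by
      apply Real.one_le_sqrt.mpr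
      rw [Real.le_log_iff_exp_le (by linarith)]
      linarith [Real.exp_one_lt_d9]
    have h3 : y ≤ 1 / 2 * (y + 2) ^ 2 * 1 := by nlinarith
    refine h3.trans ?_
    simp only [hf]
    gcongr
  obtain ⟨t, ht, hft⟩ := intermediate_value_Icc (by linarith) hcont
    (⟨by simpa [hf] using hy.le, hlarge⟩ : y ∈ Set.Icc (f 0) (f (y + 2)))
  refine ⟨t, lt_of_le_of_ne ht.1 ?_, hft⟩
  rintro rfl
  simp [hf] at hft
  linarith

lemma finite_setOf_max_mul_max_le (M : ℝ) :
    {pq : ℤ × ℤ | max 1 |(pq.1 : ℝ)| * max 1 |(pq.2 : ℝ)| ≤ M}.Finite := by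
  refine Set.Finite.subset ((Set.finite_Icc (-⌊M⌋) ⌊M⌋).prod (Set.finite_Icc (-⌊M⌋) ⌊M⌋)) ?_
  rintro ⟨p, q⟩ h
  simp only [Set.mem_ofPred_eq] at h
  have h1 := le_max_left 1 |(p : ℝ)|
  have h2 := le_max_left 1 |(q : ℝ)|
  have hp : |(p : ℝ)| ≤ M := (le_max_right 1 |(p : ℝ)|).trans (by nlinarith)
  have hq : |(q : ℝ)| ≤ M := (le_max_right 1 |(q : ℝ)|).trans (by nlinarith)
  rw [← Int.cast_abs, ← Int.le_floor, abs_le] at hp hq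
  exact ⟨hp, hq⟩

/-- Log-sensitive transference for the Littlewood setting, opposite direction.
Here ρ is the inverse of t ↦ c·t²·√(log(1+t)) on the positive reals, c = √3/2. -/
theorem littlewood_log_transfer_back (α β : ℝ) (ρ : ℝ → ℝ)
    (hρ₁ : ∀ t, 0 < t → ρ (Real.sqrt 3 / 2 * t ^ 2 * Real.sqrt (Real.log (1 + t))) = t)
    (hρ₂ : ∀ t, 0 < t → Real.sqrt 3 / 2 * ρ t ^ 2 * Real.sqrt (Real.log (1 + ρ t)) = t)
    (h : {pq : ℤ × ℤ | pq ≠ 0 ∧ ∃ t : ℝ,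
      t = Real.sqrt (max 1 |(pq.1 : ℝ)| * max 1 |(pq.2 : ℝ)|) ∧
      nint (pq.1 * α + pq.2 * β) ≤ 1 / (t ^ 2 * Real.log (1 + t))}.Infinite) :
    {q : ℕ | 0 < q ∧ nint (q * α) * nint (q * β) ≤
      (Real.sqrt 3 / 2) ^ 2 / (ρ q ^ 2 * Real.log (1 + ρ q))}.Infinite := by
  have hρpos : ∀ y, 0 < y → 0 < ρ y := by
    intro y hy
    obtain ⟨t, ht, rfl⟩ := exists_mul_sq_sqrt_log_eq hy
    rwa [hρ₁ t ht]
  set S := {q : ℕ | 0 < q ∧ nint (q * α) * nint (q * β) ≤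
      (Real.sqrt 3 / 2) ^ 2 / (ρ q ^ 2 * Real.log (1 + ρ q))}
  have hsol : ∀ K : ℝ, ∃ n ∈ S, ∃ s, K < s ∧ nint (n * α) * nint (n * β) * s ≤ 4 / 9 := by
    intro K
    set K' := max K (9 / 8)
    obtain ⟨⟨p, q⟩, ⟨hpq, t, ht, hle⟩, hM⟩ :=
      h.exists_notMem_finite (finite_setOf_max_mul_max_le (Real.exp (K' ^ 2) ^ 2))
    simp only [Set.mem_ofPred_eq, not_le] at hM
    set T := max 1 |(p : ℝ)| * max 1 |(q : ℝ)| with hT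
    have hT0 : 0 < T := lt_trans (by positivity) hM
    have htT : t ^ 2 = T := by rw [ht]; exact Real.sq_sqrt hT0.le
    have ht0 : 0 < t := by rw [ht]; exact Real.sqrt_pos.mpr hT0
    have htexp : Real.exp (K' ^ 2) < t := by
      rw [← htT] at hM
      exact lt_of_pow_lt_pow_left₀ 2 ht0.le hM
    have hL : K' ^ 2 < Real.log (1 + t) := by
      rw [Real.lt_log_iff_exp_lt (by linarith)]
      linarith
    have hL0 : 0 < Real.log (1 + t) := lt_of_le_of_lt (sq_nonneg _) hL
    have hs : K' < Real.sqrt (Real.log (1 + t)) := Real.lt_sqrt_of_sq_lt hL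
    obtain ⟨n, hn, hn1, hn2⟩ := exists_nat_of_pair_ne_zero p q α β
      (Real.sqrt (Real.log (1 + t))) hpq ((le_max_right _ _).trans_lt hs) (by
        rw [Real.sq_sqrt hL0.le, ← hT, ← htT]
        rwa [le_div_iff₀ (by positivity)] at hle)
    have hnR : (1 : ℝ) ≤ n := by exact_mod_cast hn
    have hw : 0 ≤ nint (n * α) * nint (n * β) := mul_nonneg (nint_nonneg _) (nint_nonneg _)
    refine ⟨n, ⟨hn, ?_⟩, Real.sqrt (Real.log (1 + t)), (le_max_left _ _).trans_lt hs, ?_⟩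
    · rw [← hT, ← htT] at hn1
      exact le_div_of_short ht0 (hρpos n (by linarith)) hw (hρ₂ n (by linarith)) hn1 hn2
    · refine le_trans (mul_le_mul_of_nonneg_right ?_ (Real.sqrt_nonneg _)) hn2
      exact le_mul_of_one_le_left hw hnR
  by_cases hz : ∃ n : ℕ, 0 < n ∧ nint (n * α) * nint (n * β) = 0
  · obtain ⟨n, hn, h0⟩ := hz
    refine Set.infinite_of_injective_forall_mem (f := fun k : ℕ => (k + 1) * n) ?_ ?_
    · intro a b hab
      simpa [hn.ne'] using hab
    · intro k
      have hpos : 0 < (k + 1) * n := by positivity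
      refine ⟨hpos, ?_⟩
      have hmul : ∀ x : ℝ, nint (n * x) = 0 → nint (((k + 1) * n : ℕ) * x) = 0 := by
        intro x hx
        have := nint_nat_mul_eq_zero (k + 1) hx
        rwa [← mul_assoc, ← Nat.cast_mul] at this
      have hprod : nint (((k + 1) * n : ℕ) * α) * nint (((k + 1) * n : ℕ) * β) = 0 := by
        rcases mul_eq_zero.mp h0 with h0 | h0 <;> rw [hmul _ h0] <;> ring
      rw [hprod]
      have hρ := hρpos ((k + 1) * n : ℕ) (by exact_mod_cast hpos)
      have := Real.log_nonneg (by linarith : 1 ≤ 1 + ρ ((k + 1) * n : ℕ))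
      positivity
  · push Not at hz
    intro hfin
    obtain ⟨n₀, hn₀, -⟩ := hsol 0
    obtain ⟨m, hm, hmin⟩ := Set.exists_min_image S (fun n : ℕ => nint (n * α) * nint (n * β))
      hfin ⟨n₀, hn₀⟩
    have hε : 0 < nint (m * α) * nint (m * β) :=
      lt_of_le_of_ne (mul_nonneg (nint_nonneg _) (nint_nonneg _)) (hz m hm.1).symm
    obtain ⟨n, hn, s, hs, hle⟩ := hsol (1 / (nint (m * α) * nint (m * β)))
    rw [div_lt_iff₀ hε] at hs
    have hs0 : 0 < s := by
      by_contra! hc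
      nlinarith
    have := mul_le_mul_of_nonneg_right (hmin n hn) hs0.le
    linarith
end
end
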